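/- Let B_1, …, B_m be real symmetric n×n matrices. Then Σ_{r,s=1}^{m} ‖B_r B_s − B_s B_r‖² ≤ (Σ_{r=1}^{m} ‖B_r‖²)², where ‖·‖ denotes the Frobenius norm. -/

import Mathlib

/-!
The left side and `∑ ‖B r‖²` are invariant when the family `B` is rotated by an orthogonal `m × m`
matrix. Diagonalizing the Gram matrix, one may therefore assume that the `B r` are pairwise
orthogonal. Write `B r = √(t r) • X r` with `‖X r‖ ≤ 1`; the claim becomes `tᵀ S t ≤ (∑ t)²` for
`S r s = ‖[X r, X s]‖²`. At a maximizer `t` of this form on the simplex, the maximum is at most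
`(S t) a` for every `a` with `t a > 0` (`quadForm_le_of_row_le`), so it is enough to show
`∑ b, t b * ‖[X a, X b]‖² ≤ ∑ b, t b` when `t a` is the largest weight (`sum_commutator_le`).

For this, diagonalize `X a` with eigenvalues `d i`. In the eigenbasis,
`‖[X a, X]‖² = ∑ i j, (d i - d j)² * X i j ^ 2`, which exceeds `‖X‖²` by at most
`∑ i j, ((d i - d j)² - 1)₊ * X i j ^ 2`. By Bessel's inequality (`sum_entry_sq_le_half`) the
weighted total of these excesses over `b ≠ a` is at most
`t a * ½ * ∑ i j, ((d i - d j)² - 1)₊`. Finally, if `∑ d i ^ 2 ≤ 1`, then the pairs with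
`|d i - d j| > 1` form a star: two disjoint such pairs, or a triangle of them, would have too large
a norm. For a star, Cauchy–Schwarz gives `∑ i j, ((d i - d j)² - 1)₊ ≤ 2` (`sum_excess_le`), so the
excess is at most `t a`, which is what the missing term `b = a` leaves room for.
-/

/-!
STATEMENT 11 (algebraic DDVV inequality, Lu / Ge–Tang):
Let `B 1, …, B m` be real symmetric `n × n` matrices.  Then
`∑_{r,s} ‖B r * B s - B s * B r‖² ≤ (∑_r ‖B r‖²)²`,
where `‖·‖` is the Frobenius norm, i.e. `‖A‖² = trace (Aᵀ * A)`.
-/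

open scoped BigOperators

/-- The square of the Frobenius norm of a real `n × n` matrix:
`‖A‖² = trace (Aᵀ * A)`. -/
noncomputable def frobNormSq {n : ℕ} (A : Matrix (Fin n) (Fin n) ℝ) : ℝ :=
  Matrix.trace (A.transpose * A)

/-! ### Frobenius norm and orthogonal diagonalization -/

lemma frobNormSq_eq_sum {n : ℕ} (A : Matrix (Fin n) (Fin n) ℝ) :
    frobNormSq A = ∑ i, ∑ j, A i j ^ 2 := by
  unfold frobNormSq
  rw [Finset.sum_comm]
  simp [Matrix.trace, Matrix.mul_apply, pow_two]

lemma exists_orthogonal_diagonalization {n : ℕ} (A : Matrix (Fin n) (Fin n) ℝ) (hA : A.IsSymm) :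
    ∃ U : Matrix (Fin n) (Fin n) ℝ, U * U.transpose = 1 ∧ U.transpose * U = 1 ∧
      ∃ d : Fin n → ℝ, U.transpose * A * U = Matrix.diagonal d := by
  have hH : A.IsHermitian := by
    rw [Matrix.IsHermitian, Matrix.conjTranspose_eq_transpose_of_trivial]; exact hA
  have h1 : (hH.eigenvectorUnitary : Matrix (Fin n) (Fin n) ℝ) *
      (hH.eigenvectorUnitary : Matrix (Fin n) (Fin n) ℝ).transpose = 1 := by
    have := Unitary.mul_star_self_of_mem hH.eigenvectorUnitary.2
    rwa [Matrix.star_eq_conjTranspose, Matrix.conjTranspose_eq_transpose_of_trivial] at this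
  refine ⟨hH.eigenvectorUnitary, h1, mul_eq_one_comm.mp h1, hH.eigenvalues, ?_⟩
  have := hH.conjStarAlgAut_star_eigenvectorUnitary
  simpa [Unitary.conjStarAlgAut_apply, Matrix.star_eq_conjTranspose,
    Matrix.conjTranspose_eq_transpose_of_trivial] using this

lemma frobNormSq_conj {n : ℕ} (U X : Matrix (Fin n) (Fin n) ℝ) (hU : U * U.transpose = 1) :
    frobNormSq (U.transpose * X * U) = frobNormSq X := by
  unfold frobNormSq
  have : (U.transpose * X * U).transpose * (U.transpose * X * U) =
      U.transpose * (X.transpose * X * U) := by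
    simp only [Matrix.transpose_mul, Matrix.transpose_transpose]
    calc _ = U.transpose * (X.transpose * (U * U.transpose) * X * U) := by
          simp only [Matrix.mul_assoc]
      _ = _ := by rw [hU, Matrix.mul_one]
  rw [this, Matrix.trace_mul_comm, Matrix.mul_assoc, hU, Matrix.mul_one]

/-! ### Maximizing a quadratic form on the simplex -/

/-- If `S` is symmetric with zero diagonal and `(S t) a ≤ ∑ t` whenever `t ≥ 0` and `t a` is
its largest coordinate, then `tᵀ S t ≤ (∑ t)²` for all `t ≥ 0`: at a
maximizer of the form on the simplex the first-order condition bounds the maximum by `(S t) a`. -/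
lemma quadForm_le_of_row_le {m : ℕ} (S : Matrix (Fin m) (Fin m) ℝ) (hS : S.IsSymm)
    (hdiag : ∀ a, S a a = 0)
    (hrow : ∀ t : Fin m → ℝ, (∀ a, 0 ≤ t a) → ∀ a, (∀ b, t b ≤ t a) →
      (S.mulVec t) a ≤ ∑ b, t b)
    (t : Fin m → ℝ) (ht : ∀ a, 0 ≤ t a) :
    t ⬝ᵥ S.mulVec t ≤ (∑ a, t a) ^ 2 := by
  have simplex : ∀ t ∈ stdSimplex ℝ (Fin m), t ⬝ᵥ S.mulVec t ≤ 1 := by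
    intro u hu
    obtain ⟨t, htm, hmax⟩ := (isCompact_stdSimplex ℝ (Fin m)).exists_isMaxOn ⟨u, hu⟩
      (f := fun t : Fin m → ℝ => t ⬝ᵥ S.mulVec t)
      (by
        apply Continuous.continuousOn
        simp only [dotProduct, Matrix.mulVec]
        fun_prop)
    refine (hmax hu).trans ?_
    obtain ⟨h0, h1⟩ := htm
    have hne : Nonempty (Fin m) := by
      by_contra h
      rw [not_nonempty_iff] at h
      simp at h1
    obtain ⟨a, ha⟩ := Finite.exists_max t
    have hapos : 0 < t a := by
      by_contra! h
      have : ∑ b, t b ≤ 0 := Finset.sum_nonpos fun b _ => (ha b).trans h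
      linarith
    have hr := hrow t h0 a ha
    rw [h1] at hr
    by_contra! hl
    set l := t ⬝ᵥ S.mulVec t with hldef
    obtain ⟨e, he0, hea, hel⟩ : ∃ e, 0 < e ∧ e ≤ t a ∧ e ≤ l - 1 :=
      ⟨min (t a) (l - 1), lt_min hapos (by linarith), min_le_left _ _, min_le_right _ _⟩
    -- The competitor moves away from the vertex `a`, which stays in the simplex as `e ≤ t a`.
    have hmem : (1 + e) • t - e • (Pi.single a (1 : ℝ) : Fin m → ℝ) ∈ stdSimplex ℝ (Fin m) := by
      constructor
      · intro b
        by_cases hb : b = a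
        · subst hb
          simp
          nlinarith
        · simp [hb]
          exact mul_nonneg (by linarith) (h0 b)
      · simp [Finset.sum_sub_distrib, ← Finset.mul_sum, h1]
    have hle := hmax hmem
    have hsw : t ⬝ᵥ S.mulVec (Pi.single a (1 : ℝ)) = (S.mulVec t) a := by
      rw [Matrix.dotProduct_mulVec, ← Matrix.mulVec_transpose, hS.eq]
      simp
    have hval : ((1 + e) • t - e • (Pi.single a (1 : ℝ) : Fin m → ℝ)) ⬝ᵥ
        S.mulVec ((1 + e) • t - e • (Pi.single a (1 : ℝ) : Fin m → ℝ)) =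
        (1 + e) ^ 2 * l - 2 * e * (1 + e) * (S.mulVec t) a := by
      simp only [Matrix.mulVec_sub, Matrix.mulVec_smul, sub_dotProduct, dotProduct_sub,
        smul_dotProduct, dotProduct_smul, hsw, smul_eq_mul, single_dotProduct]
      rw [← hldef]
      simp [hdiag]
      ring
    simp only [Set.mem_ofPred_eq] at hle
    rw [hval] at hle
    have h2 : (2 + e) * l ≤ 2 * (1 + e) * (S.mulVec t) a := by
      have : e * ((2 + e) * l) ≤ e * (2 * (1 + e) * (S.mulVec t) a) := by
        linarith
      exact le_of_mul_le_mul_left this he0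
    nlinarith
  have hs0 : 0 ≤ ∑ a, t a := Finset.sum_nonneg fun a _ => ht a
  rcases hs0.eq_or_lt with hs | hs
  · have : t = 0 := by
      funext a
      exact (Finset.sum_eq_zero_iff_of_nonneg fun a _ => ht a).mp hs.symm a (Finset.mem_univ a)
    simp [this]
  · have := simplex ((∑ a, t a)⁻¹ • t)
      ⟨fun a => mul_nonneg (inv_nonneg.mpr hs0) (ht a), by
        simp [← Finset.mul_sum, hs.ne']⟩
    rw [Matrix.mulVec_smul, smul_dotProduct, dotProduct_smul, smul_eq_mul, smul_eq_mul] at this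
    field_simp at this
    exact this

/-! ### Large gaps in a vector of norm at most one -/

/-- The pairs of a vector of norm at most one whose entries differ by more than one all share
a common index. -/
lemma exists_star_center {n : ℕ} (x : Fin n → ℝ) (hx : ∑ i, x i ^ 2 ≤ 1) (a b : Fin n)
    (hab : 1 < (x a - x b) ^ 2) :
    ∃ c, ∀ i j, 1 < (x i - x j) ^ 2 → i = c ∨ j = c := by
  have irr : ∀ i j, 1 < (x i - x j) ^ 2 → i ≠ j := by
    rintro i j h rfl
    norm_num at h
  have disj : ∀ i j k l, 1 < (x i - x j) ^ 2 → 1 < (x k - x l) ^ 2 →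
      i = k ∨ i = l ∨ j = k ∨ j = l := by
    intro i j k l h1 h2
    by_contra! h
    have hs : ∑ p ∈ ({i, j, k, l} : Finset (Fin n)), x p ^ 2 ≤ 1 :=
      (Finset.sum_le_sum_of_subset_of_nonneg (Finset.subset_univ _)
        fun _ _ _ => sq_nonneg _).trans hx
    rw [Finset.sum_insert (by simp [h, irr i j h1]), Finset.sum_insert (by simp [h]),
      Finset.sum_insert (by simp [irr k l h2]), Finset.sum_singleton] at hs
    nlinarith [sq_nonneg (x i + x j), sq_nonneg (x k + x l)]
  -- Of three pairwise gaps, the largest is the sum of the other two, so it would exceed `2 > √2`.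
  have tri : ∀ i j k, 1 < (x i - x j) ^ 2 → 1 < (x j - x k) ^ 2 → 1 < (x i - x k) ^ 2 → False := by
    have two : ∀ i j, i ≠ j → (x i - x j) ^ 2 ≤ 2 := by
      intro i j hij
      have hs : ∑ p ∈ ({i, j} : Finset (Fin n)), x p ^ 2 ≤ 1 :=
        (Finset.sum_le_sum_of_subset_of_nonneg (Finset.subset_univ _)
          fun _ _ _ => sq_nonneg _).trans hx
      rw [Finset.sum_pair hij] at hs
      nlinarith [sq_nonneg (x i + x j)]
    intro i j k h1 h2 h3
    have g1 := two i j (irr _ _ h1)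
    have g2 := two j k (irr _ _ h2)
    have g3 := two i k (irr _ _ h3)
    rw [one_lt_sq_iff_one_lt_abs, lt_abs] at h1 h2 h3
    rcases h1 with h1 | h1 <;> rcases h2 with h2 | h2 <;> rcases h3 with h3 | h3 <;> nlinarith
  have symm : ∀ i j, 1 < (x i - x j) ^ 2 → 1 < (x j - x i) ^ 2 := by
    intro i j h
    nlinarith
  by_cases hA : ∀ i j, 1 < (x i - x j) ^ 2 → i = a ∨ j = a
  · exact ⟨a, hA⟩
  · refine ⟨b, ?_⟩
    -- A pair avoiding `a` must meet `{a, b}` in `b`.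
    obtain ⟨d, hda, hbd⟩ : ∃ d, d ≠ a ∧ 1 < (x b - x d) ^ 2 := by
      push Not at hA
      obtain ⟨i, j, hij, hia, hja⟩ := hA
      rcases disj a b i j hab hij with h | h | h | h
      · exact absurd h.symm hia
      · exact absurd h.symm hja
      · exact ⟨j, hja, h ▸ hij⟩
      · exact ⟨i, hia, h ▸ symm _ _ hij⟩
    intro i j hij
    by_contra! h
    have key : ∀ i j, 1 < (x i - x j) ^ 2 → i ≠ b → j ≠ b → i = a → False := by
      intro i j hij hi hj hia
      subst hia
      rcases disj i j b d hij hbd with h | h | h | h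
      · exact hi h
      · exact hda h.symm
      · exact hj h
      · subst h
        exact tri i b j hab hbd hij
    rcases disj a b i j hab hij with h' | h' | h' | h'
    · exact key i j hij h.1 h.2 h'.symm
    · exact key j i (symm _ _ hij) h.2 h.1 h'.symm
    · exact h.1 h'.symm
    · exact h.2 h'.symm

/-- The sum runs over ordered pairs, so each unordered pair is counted twice, whence the bound `2`.
The star with `k` edges has largest Laplacian eigenvalue `k + 1`, which gives the bound `(k + 1) - k = 1` for the unordered sum. -/
lemma sum_excess_le {n : ℕ} (x : Fin n → ℝ) (hx : ∑ i, x i ^ 2 ≤ 1) :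
    ∑ i, ∑ j, max ((x i - x j) ^ 2 - 1) 0 ≤ 2 := by
  by_cases hE : ∃ a b, 1 < (x a - x b) ^ 2
  swap
  · push Not at hE
    rw [Finset.sum_eq_zero]
    · norm_num
    · exact fun i _ => Finset.sum_eq_zero fun j _ => max_eq_right (by linarith [hE i j])
  obtain ⟨a, b, hab⟩ := hE
  obtain ⟨c, hc⟩ := exists_star_center x hx a b hab
  have hstar : ∑ j, max ((x c - x j) ^ 2 - 1) 0 ≤ 1 := by
    set J := Finset.univ.filter fun j => 1 < (x c - x j) ^ 2 with hJ
    have h1 : ∑ j, max ((x c - x j) ^ 2 - 1) 0 = ∑ j ∈ J, ((x c - x j) ^ 2 - 1) := by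
      rw [hJ, Finset.sum_filter]
      refine Finset.sum_congr rfl fun j _ => ?_
      split_ifs with h
      · exact max_eq_left (by linarith)
      · exact max_eq_right (by linarith)
    have hcJ : c ∉ J := by simp [hJ]
    have hs : ∑ p ∈ insert c J, x p ^ 2 ≤ 1 :=
      (Finset.sum_le_sum_of_subset_of_nonneg (Finset.subset_univ _)
        fun _ _ _ => sq_nonneg _).trans hx
    rw [Finset.sum_insert hcJ] at hs
    have hcs := sq_sum_le_card_mul_sum_sq (s := J) (f := x)
    have h2 : ∑ j ∈ J, ((x c - x j) ^ 2 - 1) =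
        J.card * x c ^ 2 - 2 * x c * ∑ j ∈ J, x j + ∑ j ∈ J, x j ^ 2 - J.card := by
      simp only [sub_sq, Finset.sum_sub_distrib, Finset.sum_add_distrib, Finset.mul_sum]
      simp
    rw [h1, h2]
    have hk : (0 : ℝ) ≤ J.card := Nat.cast_nonneg _
    nlinarith [sq_nonneg (x c + ∑ j ∈ J, x j), mul_le_mul_of_nonneg_left hs hk]
  have hle : ∀ i j, max ((x i - x j) ^ 2 - 1) 0 ≤
      (if i = c then max ((x c - x j) ^ 2 - 1) 0 else 0) +
      (if j = c then max ((x c - x i) ^ 2 - 1) 0 else 0) := by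
    intro i j
    by_cases h : 1 < (x i - x j) ^ 2
    · rcases hc i j h with h' | h'
      · subst h'
        rw [if_pos rfl]
        have : 0 ≤ (if j = i then max ((x i - x i) ^ 2 - 1) 0 else 0) := by
          split_ifs <;> simp
        linarith
      · subst h'
        rw [if_pos rfl, sub_sq_comm (x j) (x i)]
        have : 0 ≤ (if i = j then max ((x j - x j) ^ 2 - 1) 0 else 0) := by
          split_ifs <;> simp
        linarith
    · rw [max_eq_right (by linarith)]
      apply add_nonneg <;> split_ifs <;> simp
  calc _ ≤ ∑ i, ∑ j, ((if i = c then max ((x c - x j) ^ 2 - 1) 0 else 0) +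
      (if j = c then max ((x c - x i) ^ 2 - 1) 0 else 0)) :=
        Finset.sum_le_sum fun i _ => Finset.sum_le_sum fun j _ => hle i j
    _ = 2 * ∑ j, max ((x c - x j) ^ 2 - 1) 0 := by
        simp only [Finset.sum_add_distrib]
        rw [Finset.sum_comm]
        simp
        ring
    _ ≤ 2 := by linarith

/-! ### Commutators with orthogonal families -/

/-- Bessel's inequality for the off-diagonal matrix unit `(E i j + E j i) / 2`, whose squared
norm is `1 / 2`. -/
lemma sum_entry_sq_le_half {n m : ℕ} (Y : Fin m → Matrix (Fin n) (Fin n) ℝ)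
    (hsymm : ∀ r, (Y r).IsSymm) (hnorm : ∀ r, frobNormSq (Y r) ≤ 1)
    (horth : ∀ r s, r ≠ s → Matrix.trace ((Y r).transpose * Y s) = 0)
    (i j : Fin n) (hij : i ≠ j) : ∑ r, Y r i j ^ 2 ≤ 1 / 2 := by
  set P := ∑ r, Y r i j • Y r with hP
  have hPij : P i j = ∑ r, Y r i j ^ 2 := by
    simp [hP, Matrix.sum_apply, pow_two]
  have hPji : P j i = ∑ r, Y r i j ^ 2 := by
    simp only [hP, Matrix.sum_apply, Matrix.smul_apply, smul_eq_mul, pow_two]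
    exact Finset.sum_congr rfl fun r _ => by rw [(hsymm r).apply]
  have hup : frobNormSq P ≤ ∑ r, Y r i j ^ 2 := by
    have : frobNormSq P = ∑ r, Y r i j ^ 2 * frobNormSq (Y r) := by
      unfold frobNormSq
      rw [hP, Matrix.transpose_sum, Matrix.sum_mul, Matrix.trace_sum]
      refine Finset.sum_congr rfl fun r _ => ?_
      rw [Matrix.mul_sum, Matrix.trace_sum, Finset.sum_eq_single r]
      · simp; ring
      · intro s _ hs
        simp [horth r s hs.symm]
      · simp
    rw [this]
    exact Finset.sum_le_sum fun r _ => mul_le_of_le_one_right (sq_nonneg _) (hnorm r)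
  have hlow : P i j ^ 2 + P j i ^ 2 ≤ frobNormSq P := by
    have hne : (i, j) ≠ (j, i) := fun h => hij (Prod.ext_iff.mp h).1
    rw [frobNormSq_eq_sum, ← Fintype.sum_prod_type',
      ← Finset.sum_pair (f := fun p : Fin n × Fin n => P p.1 p.2 ^ 2) hne]
    exact Finset.sum_le_sum_of_subset_of_nonneg (Finset.subset_univ _) fun _ _ _ => sq_nonneg _
  rw [hPij, hPji] at hlow
  by_contra! h
  nlinarith

/-- The weighted sum of `‖[X a, X b]‖²` over `b ≠ a` exceeds that of `‖X b‖² ≤ 1` by at most the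
largest weight `t a`; the term `b = a` vanishes on the left and supplies this `t a` on the right. -/
lemma sum_commutator_le {n m : ℕ} (X : Fin m → Matrix (Fin n) (Fin n) ℝ)
    (hsymm : ∀ r, (X r).IsSymm) (hnorm : ∀ r, frobNormSq (X r) ≤ 1)
    (horth : ∀ r s, r ≠ s → Matrix.trace ((X r).transpose * X s) = 0)
    (t : Fin m → ℝ) (ht : ∀ a, 0 ≤ t a) (a : Fin m) (ha : ∀ b, t b ≤ t a) :
    ∑ b, frobNormSq (X a * X b - X b * X a) * t b ≤ ∑ b, t b := by
  obtain ⟨U, hU, -, d, hd⟩ := exists_orthogonal_diagonalization (X a) (hsymm a)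
  set Y : Fin m → Matrix (Fin n) (Fin n) ℝ := fun r => U.transpose * X r * U with hY
  have hYs : ∀ r, (Y r).IsSymm := fun r => by
    simp [hY, Matrix.IsSymm, Matrix.transpose_mul, (hsymm r).eq, Matrix.mul_assoc]
  have hYn : ∀ r, frobNormSq (Y r) ≤ 1 := fun r => by
    rw [hY]; simp only; rw [frobNormSq_conj _ _ hU]; exact hnorm r
  have hmul : ∀ A B : Matrix (Fin n) (Fin n) ℝ, (U.transpose * A * U) * (U.transpose * B * U) =
      U.transpose * (A * B) * U := fun A B => by
    calc _ = U.transpose * A * (U * U.transpose) * B * U := by simp only [Matrix.mul_assoc]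
      _ = _ := by rw [hU]; simp only [Matrix.mul_assoc, Matrix.mul_one]
  have hYo : ∀ r s, r ≠ s → Matrix.trace ((Y r).transpose * Y s) = 0 := fun r s hrs => by
    rw [(hYs r).eq]
    simp only [hY]
    rw [hmul, Matrix.trace_mul_comm, ← Matrix.mul_assoc, hU, Matrix.one_mul]
    have := horth r s hrs
    rwa [(hsymm r).eq] at this
  have hcomm : ∀ b, frobNormSq (X a * X b - X b * X a) =
      ∑ i, ∑ j, (d i - d j) ^ 2 * Y b i j ^ 2 := fun b => by
    rw [← frobNormSq_conj U _ hU, Matrix.mul_sub, Matrix.sub_mul, ← hmul, ← hmul, hd,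
      frobNormSq_eq_sum]
    refine Finset.sum_congr rfl fun i _ => Finset.sum_congr rfl fun j _ => ?_
    simp [hY, Matrix.diagonal_mul, Matrix.mul_diagonal]
    ring
  have hdn : ∑ i, d i ^ 2 ≤ 1 := by
    have h := hYn a
    simp only [hY] at h
    rw [hd] at h
    simpa [frobNormSq, Matrix.diagonal_transpose, Matrix.trace, pow_two] using h
  set f : Fin n → Fin n → ℝ := fun i j => max ((d i - d j) ^ 2 - 1) 0 with hf
  have hf0 : ∀ i j, 0 ≤ f i j := fun i j => le_max_right _ _
  have hb : ∀ b, frobNormSq (X a * X b - X b * X a) * t b ≤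
      t b + t a * ∑ i, ∑ j, f i j * Y b i j ^ 2 := fun b => by
    have h1 : frobNormSq (X a * X b - X b * X a) ≤
        frobNormSq (Y b) + ∑ i, ∑ j, f i j * Y b i j ^ 2 := by
      rw [hcomm, frobNormSq_eq_sum, ← Finset.sum_add_distrib]
      refine Finset.sum_le_sum fun i _ => ?_
      rw [← Finset.sum_add_distrib]
      refine Finset.sum_le_sum fun j _ => ?_
      have := le_max_left ((d i - d j) ^ 2 - 1) 0
      change _ ≤ f i j at this
      nlinarith [sq_nonneg (Y b i j)]
    have h2 : 0 ≤ ∑ i, ∑ j, f i j * Y b i j ^ 2 :=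
      Finset.sum_nonneg fun i _ => Finset.sum_nonneg fun j _ => mul_nonneg (hf0 i j) (sq_nonneg _)
    nlinarith [ht b, ha b, hYn b, mul_le_mul_of_nonneg_right h1 (ht b),
      mul_le_mul_of_nonneg_right (hYn b) (ht b), mul_le_mul_of_nonneg_right (ha b) h2]
  have hbes : ∑ b, ∑ i, ∑ j, f i j * Y b i j ^ 2 ≤ 1 := by
    calc _ = ∑ i, ∑ j, f i j * ∑ b, Y b i j ^ 2 := by
          rw [Finset.sum_comm]
          refine Finset.sum_congr rfl fun i _ => ?_
          rw [Finset.sum_comm]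
          exact Finset.sum_congr rfl fun j _ => (Finset.mul_sum _ _ _).symm
      _ ≤ ∑ i, ∑ j, f i j * (1 / 2) := by
          refine Finset.sum_le_sum fun i _ => Finset.sum_le_sum fun j _ => ?_
          by_cases hij : i = j
          · subst hij
            simp [hf]
          · exact mul_le_mul_of_nonneg_left
              (sum_entry_sq_le_half Y hYs hYn hYo i j hij) (hf0 i j)
      _ = (∑ i, ∑ j, f i j) * (1 / 2) := by simp only [Finset.sum_mul]
      _ ≤ 1 := by linarith [sum_excess_le d hdn]
  have hself : frobNormSq (X a * X a - X a * X a) = 0 := by simp [frobNormSq]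
  have hnn : ∀ b, 0 ≤ ∑ i, ∑ j, f i j * Y b i j ^ 2 := fun b =>
    Finset.sum_nonneg fun i _ => Finset.sum_nonneg fun j _ => mul_nonneg (hf0 i j) (sq_nonneg _)
  rw [← Finset.add_sum_erase _ _ (Finset.mem_univ a), ← Finset.add_sum_erase _ t (Finset.mem_univ a),
    hself, zero_mul, zero_add]
  calc _ ≤ ∑ b ∈ Finset.univ.erase a, (t b + t a * ∑ i, ∑ j, f i j * Y b i j ^ 2) :=
        Finset.sum_le_sum fun b _ => hb b
    _ = ∑ b ∈ Finset.univ.erase a, t b +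
        t a * ∑ b ∈ Finset.univ.erase a, ∑ i, ∑ j, f i j * Y b i j ^ 2 := by
        rw [Finset.sum_add_distrib, Finset.mul_sum]
    _ ≤ ∑ b ∈ Finset.univ.erase a, t b + t a * 1 := by
        gcongr
        · exact ht a
        · exact (Finset.sum_le_sum_of_subset_of_nonneg (Finset.erase_subset _ _)
            fun b _ _ => hnn b).trans hbes
    _ = _ := by ring

/-- The inequality for a pairwise orthogonal family. -/
lemma ddvv_of_orthogonal {n m : ℕ} (A : Fin m → Matrix (Fin n) (Fin n) ℝ)
    (hsymm : ∀ r, (A r).IsSymm)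
    (horth : ∀ r s, r ≠ s → Matrix.trace ((A r).transpose * A s) = 0) :
    ∑ r, ∑ s, frobNormSq (A r * A s - A s * A r) ≤ (∑ r, frobNormSq (A r)) ^ 2 := by
  have hN : ∀ r, 0 ≤ frobNormSq (A r) := fun r => by
    rw [frobNormSq_eq_sum]; positivity
  have hsm : ∀ (c : ℝ) (M : Matrix (Fin n) (Fin n) ℝ),
      frobNormSq (c • M) = c ^ 2 * frobNormSq M := fun c M => by
    simp [frobNormSq]; ring
  set q : Fin m → ℝ := fun r => Real.sqrt (frobNormSq (A r)) with hq
  have hq2 : ∀ r, q r ^ 2 = frobNormSq (A r) := fun r => Real.sq_sqrt (hN r)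
  -- Zero matrices stay zero here, as `0⁻¹ = 0`.
  set X : Fin m → Matrix (Fin n) (Fin n) ℝ := fun r => (q r)⁻¹ • A r with hX
  have hAX : ∀ r, A r = q r • X r := fun r => by
    by_cases h : q r = 0
    · have h0 : frobNormSq (A r) = 0 := by rw [← hq2, h]; norm_num
      have : A r = 0 := by
        rw [frobNormSq, ← Matrix.conjTranspose_eq_transpose_of_trivial] at h0
        exact Matrix.trace_conjTranspose_mul_self_eq_zero_iff.mp h0
      simp [hX, this]
    · simp [hX, smul_smul, h]
  have hXs : ∀ r, (X r).IsSymm := fun r => (hsymm r).smul _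
  have hXn : ∀ r, frobNormSq (X r) ≤ 1 := fun r => by
    simp only [hX]
    rw [hsm, ← hq2, inv_pow]
    exact inv_mul_le_one
  have hXo : ∀ r s, r ≠ s → Matrix.trace ((X r).transpose * X s) = 0 := fun r s h => by
    simp [hX, horth r s h]
  have hanti : ∀ M N : Matrix (Fin n) (Fin n) ℝ,
      frobNormSq (M * N - N * M) = frobNormSq (N * M - M * N) := fun M N => by
    rw [← neg_sub (N * M), ← neg_one_smul ℝ, hsm]; norm_num
  have main := quadForm_le_of_row_le
    (Matrix.of fun r s => frobNormSq (X r * X s - X s * X r))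
    (by ext r s; exact hanti _ _)
    (by intro r; simp [frobNormSq])
    (fun t ht a ha => by
      have := sum_commutator_le X hXs hXn hXo t ht a ha
      simpa [Matrix.mulVec, dotProduct] using this)
    (fun r => frobNormSq (A r)) hN
  refine le_trans (le_of_eq ?_) main
  simp only [dotProduct, Matrix.mulVec, Finset.mul_sum, Matrix.of_apply]
  refine Finset.sum_congr rfl fun r _ => Finset.sum_congr rfl fun s _ => ?_
  have : A r * A s - A s * A r = (q r * q s) • (X r * X s - X s * X r) := by
    rw [hAX r, hAX s]
    simp [smul_sub, smul_smul, mul_comm]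
  rw [this, hsm, ← hq2, ← hq2]
  ring

/-! ### Reduction to an orthogonal family -/

/-- The rotation of a family of matrices by an orthogonal matrix preserves the total squared
norm. -/
lemma sum_frobNormSq_rotate {n m : ℕ} (U : Matrix (Fin m) (Fin m) ℝ) (hU : U * U.transpose = 1)
    (F : Fin m → Matrix (Fin n) (Fin n) ℝ) :
    ∑ a, frobNormSq (∑ r, U r a • F r) = ∑ r, frobNormSq (F r) := by
  have hx : ∀ x : Fin m → ℝ, ∑ a, (∑ r, U r a * x r) ^ 2 = ∑ r, x r ^ 2 := fun x => by
    have : (Matrix.mulVec U.transpose x) ⬝ᵥ (Matrix.mulVec U.transpose x) = x ⬝ᵥ x := by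
      rw [Matrix.dotProduct_mulVec, Matrix.vecMul_transpose, Matrix.mulVec_mulVec, hU,
        Matrix.one_mulVec]
    simpa [dotProduct, Matrix.mulVec, pow_two] using this
  simp only [frobNormSq_eq_sum]
  have hswap : ∀ g : Fin m → Fin n → Fin n → ℝ,
      ∑ a, ∑ i, ∑ j, g a i j = ∑ i, ∑ j, ∑ a, g a i j := fun g => by
    rw [Finset.sum_comm]
    exact Finset.sum_congr rfl fun i _ => Finset.sum_comm
  rw [hswap, hswap]
  refine Finset.sum_congr rfl fun i _ => Finset.sum_congr rfl fun j _ => ?_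
  simpa [Matrix.sum_apply] using hx fun r => F r i j

theorem ddvv_algebraic_inequality {n m : ℕ}
    (B : Fin m → Matrix (Fin n) (Fin n) ℝ)
    (hsymm : ∀ r, (B r).IsSymm) :
    ∑ r : Fin m, ∑ s : Fin m, frobNormSq (B r * B s - B s * B r) ≤
      (∑ r : Fin m, frobNormSq (B r)) ^ 2 := by
  -- Diagonalizing the Gram matrix rotates the family into an orthogonal one.
  obtain ⟨U, hU, -, d, hd⟩ := exists_orthogonal_diagonalization
    (Matrix.of fun r s => Matrix.trace ((B r).transpose * B s))
    (by
      ext r s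
      simp only [Matrix.transpose_apply, Matrix.of_apply]
      rw [← Matrix.trace_transpose, Matrix.transpose_mul, Matrix.transpose_transpose])
  set A : Fin m → Matrix (Fin n) (Fin n) ℝ := fun a => ∑ r, U r a • B r with hA
  have hAs : ∀ a, (A a).IsSymm := fun a => by
    simp only [hA, Matrix.IsSymm, Matrix.transpose_sum, Matrix.transpose_smul]
    exact Finset.sum_congr rfl fun r _ => by rw [(hsymm r).eq]
  have hAo : ∀ a b, a ≠ b → Matrix.trace ((A a).transpose * A b) = 0 := fun a b hab => by
    have h := congrFun (congrFun hd a) b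
    rw [Matrix.diagonal_apply_ne _ hab] at h
    rw [← h, Matrix.mul_assoc]
    simp only [hA, Matrix.transpose_sum, Matrix.transpose_smul, Matrix.sum_mul,
      Matrix.trace_sum, Matrix.smul_mul, Matrix.mul_smul, Matrix.trace_smul, smul_eq_mul,
      Matrix.mul_apply, Matrix.transpose_apply, Matrix.of_apply, Finset.mul_sum]
    rw [Finset.sum_comm]
    refine Finset.sum_congr rfl fun r _ => Finset.sum_congr rfl fun s _ => ?_
    ring
  have h1 := ddvv_of_orthogonal A hAs hAo
  have hin : ∀ a b, A a * A b - A b * A a =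
      ∑ s, U s b • (A a * B s - B s * A a) := fun a b => by
    conv_lhs => rw [show A b = ∑ s, U s b • B s from rfl]
    simp [Matrix.mul_sum, Matrix.sum_mul, smul_sub, Finset.sum_sub_distrib]
  have hout : ∀ a s, A a * B s - B s * A a = ∑ r, U r a • (B r * B s - B s * B r) := fun a s => by
    simp [hA, Matrix.mul_sum, Matrix.sum_mul, smul_sub, Finset.sum_sub_distrib]
  have h2 : ∑ a, ∑ b, frobNormSq (A a * A b - A b * A a) =
      ∑ r, ∑ s, frobNormSq (B r * B s - B s * B r) := by
    simp only [hin, sum_frobNormSq_rotate U hU]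
    rw [Finset.sum_comm]
    simp only [hout, sum_frobNormSq_rotate U hU]
    rw [Finset.sum_comm]
  rw [h2, sum_frobNormSq_rotate U hU] at h1
  exact h1
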